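/- Let α be a strongly continuous one-parameter isometric representation on a Banach space E, and let K ⊆ E* be a separating set of functionals with θ ∘ α_t ∈ K for all θ ∈ K, t ∈ ℝ. Let z ∈ ℂ and v, w ∈ E be such that for every θ ∈ K there exists a function f_θ : S(z) → ℂ, bounded and continuous on S(z), analytic on its interior, with f_θ(t) = θ(α_t(v)) for all t ∈ ℝ and f_θ(z) = θ(w). Then v ∈ D(α_z) and α_z(v) = w. -/

import Mathlib

open Complex MeasureTheory Filter Topology Set

noncomputable section

/-- The closed horizontal strip between the real axis and the line `Im = z.im`. -/
def hStrip (z : ℂ) : Set ℂ := {y : ℂ | y.im ∈ Set.uIcc 0 z.im}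

/-- A strongly continuous one-parameter (contractive, hence isometric) representation. -/
structure IsOneParamRep {E : Type*} [NormedAddCommGroup E] [NormedSpace ℂ E]
    (α : ℝ → E →L[ℂ] E) : Prop where
  map_add : ∀ s t : ℝ, α (s + t) = (α s).comp (α t)
  map_zero : α 0 = ContinuousLinearMap.id ℂ E
  norm_le : ∀ t : ℝ, ‖α t‖ ≤ 1
  strong_cont : ∀ a : E, Continuous fun t : ℝ => α t a

/-- `(a, b)` lies in the graph of the analytic continuation `α_z`:  there is a function `f`,
continuous on the strip `S(z)`, analytic in its interior, agreeing with `t ↦ α_t a` on `ℝ`,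
with `f z = b`. -/
def HasContVal {E : Type*} [NormedAddCommGroup E] [NormedSpace ℂ E]
    (α : ℝ → E →L[ℂ] E) (z : ℂ) (a b : E) : Prop :=
  ∃ f : ℂ → E, ContinuousOn f (hStrip z) ∧
    DifferentiableOn ℂ f (interior (hStrip z)) ∧
    (∀ t : ℝ, f t = α t a) ∧ f z = b

/-!
A bounded holomorphic function on the strip is determined by its values on the real line, and
averaging it over real translates by a Gaussian commutes with continuation off the line. The
Gaussian average `R_r v` of `t ↦ α t v` has an entire orbit, whose value at `z` depends on the real
orbit of `v` only. Pairing this value with `θ ∈ K` gives `θ (R_r w)`: the given extension of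
`θ (α t v)` takes the values `θ (α t w)` on the line `z + ℝ`, because `K` is stable under `α`. So
`α_z` sends `R_r v` to `R_r w`. As `r → ∞` these vectors converge to `v` and `w`, and `α_z` is
closed, since by Phragmén–Lindelöf an extended orbit is bounded by its values at `0` and `z`.
-/

theorem aestronglyMeasurable_deriv_of_eventually {X : Type*} [MeasurableSpace X] {μ : Measure X}
    {F : Type*} [NormedAddCommGroup F] [NormedSpace ℂ F] {f : ℂ → X → F} {u : ℂ}
    (hmeas : ∀ᶠ y in 𝓝 u, AEStronglyMeasurable (f y) μ)
    (hdiff : ∀ᵐ x ∂μ, DifferentiableAt ℂ (f · x) u) :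
    AEStronglyMeasurable (fun x => deriv (f · x) u) μ := by
  obtain ⟨y, hy⟩ := exists_seq_tendsto (𝓝[≠] u)
  obtain ⟨N, hN⟩ := eventually_atTop.1 ((hy.mono_right nhdsWithin_le_nhds).eventually hmeas)
  refine aestronglyMeasurable_of_tendsto_ae atTop (f := fun n x => slope (f · x) u (y (n + N)))
    (fun n => ?_) ?_
  · simp only [slope_def_module]
    exact ((hN _ (Nat.le_add_left _ _)).sub (hmeas.self_of_nhds)).const_smul _
  · filter_upwards [hdiff] with x hx
    exact (hx.hasDerivAt.tendsto_slope.comp hy).comp (tendsto_add_atTop_nat N)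

theorem differentiableOn_integral_of_dominated {X : Type*} [MeasurableSpace X] {μ : Measure X}
    {F : Type*} [NormedAddCommGroup F] [NormedSpace ℂ F] {U : Set ℂ} {f : ℂ → X → F}
    (hU : IsOpen U) (hmeas : ∀ u ∈ U, AEStronglyMeasurable (f u) μ)
    (hdiff : ∀ᵐ x ∂μ, DifferentiableOn ℂ (f · x) U)
    (hbound : ∀ u ∈ U, ∃ s ∈ 𝓝 u, ∃ bound : X → ℝ, Integrable bound μ ∧
      ∀ᵐ x ∂μ, ∀ y ∈ s, ‖f y x‖ ≤ bound x) :
    DifferentiableOn ℂ (fun u => ∫ x, f u x ∂μ) U := by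
  intro u hu
  obtain ⟨s, hs, bound, hbound_int, hle⟩ := hbound u hu
  obtain ⟨r, hr, hball⟩ : ∃ r > 0, Metric.closedBall u (r + r) ⊆ s ∩ U := by
    obtain ⟨δ, hδ, hsub⟩ :=
      Metric.nhds_basis_closedBall.mem_iff.1 (inter_mem hs (hU.mem_nhds hu))
    exact ⟨δ / 2, half_pos hδ, by rwa [add_halves]⟩
  have hnear : ∀ y ∈ Metric.ball u r, Metric.closedBall y r ⊆ s ∩ U := fun y hy =>
    (Metric.closedBall_subset_closedBall' (by gcongr; exact (Metric.mem_ball.1 hy).le)).trans hball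
  have hderiv : ∀ᵐ x ∂μ, ∀ y ∈ Metric.ball u r, HasDerivAt (f · x) (deriv (f · x) y) y := by
    filter_upwards [hdiff] with x hx y hy
    exact (hx.differentiableAt (hU.mem_nhds
      (hnear y hy (Metric.mem_closedBall_self hr.le)).2)).hasDerivAt
  have hcauchy : ∀ᵐ x ∂μ, ∀ y ∈ Metric.ball u r, ‖deriv (f · x) y‖ ≤ bound x / r := by
    filter_upwards [hdiff, hle] with x hx hlex y hy
    exact norm_deriv_le_of_forall_mem_sphere_norm_le hr
      (hx.diffContOnCl_ball ((hnear y hy).trans inter_subset_right))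
      fun v hv => hlex v (hnear y hy (Metric.sphere_subset_closedBall hv)).1
  have hmeas_deriv : AEStronglyMeasurable (fun x => deriv (f · x) u) μ :=
    aestronglyMeasurable_deriv_of_eventually (eventually_of_mem (hU.mem_nhds hu) hmeas)
      (hdiff.mono fun x hx => hx.differentiableAt (hU.mem_nhds hu))
  exact (hasDerivAt_integral_of_dominated_loc_of_deriv_le (Metric.ball_mem_nhds u hr)
    (eventually_of_mem (hU.mem_nhds hu) hmeas)
    (hbound_int.mono' (hmeas u hu) (hle.mono fun x hx => hx u (mem_of_mem_nhds hs)))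
    hmeas_deriv hcauchy (hbound_int.div_const r) hderiv).2.differentiableAt.differentiableWithinAt

theorem hStrip_eq (z : ℂ) : hStrip z = im ⁻¹' Icc (min 0 z.im) (max 0 z.im) := rfl

theorem interior_hStrip (z : ℂ) :
    interior (hStrip z) = im ⁻¹' Ioo (min 0 z.im) (max 0 z.im) := by
  rw [hStrip_eq, interior_preimage_im, interior_Icc]

theorem isClosed_hStrip (z : ℂ) : IsClosed (hStrip z) :=
  isClosed_Icc.preimage continuous_im

theorem hStrip_subset_closure_interior {z : ℂ} (hz : z.im ≠ 0) :
    hStrip z ⊆ closure (interior (hStrip z)) := by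
  rw [interior_hStrip, closure_preimage_im, closure_Ioo (min_lt_max.2 hz.symm).ne]
  exact subset_rfl

theorem ofReal_mem_hStrip (z : ℂ) (t : ℝ) : (t : ℂ) ∈ hStrip z := by
  simp [hStrip]

theorem self_mem_hStrip (z : ℂ) : z ∈ hStrip z := by
  simp [hStrip]

theorem add_ofReal_mem_hStrip {z u : ℂ} (hu : u ∈ hStrip z) (t : ℝ) : u + t ∈ hStrip z := by
  simpa [hStrip] using hu

theorem add_ofReal_mem_interior_hStrip {z u : ℂ} (hu : u ∈ interior (hStrip z)) (t : ℝ) :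
    u + t ∈ interior (hStrip z) := by
  simpa [interior_hStrip] using hu

theorem im_mul_sub_im_pos_of_mem_interior_hStrip {z u : ℂ} (hz : z.im ≠ 0)
    (hu : u ∈ interior (hStrip z)) : 0 < z.im * (z.im - u.im) := by
  rw [interior_hStrip] at hu
  obtain ⟨hlo, hhi⟩ := hu
  rcases lt_or_gt_of_ne hz with hneg | hpos
  · rw [min_eq_right hneg.le] at hlo
    exact mul_pos_of_neg_of_neg hneg (sub_neg.2 hlo)
  · rw [max_eq_right hpos.le] at hhi
    exact mul_pos hpos (sub_pos.2 hhi)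

/-- `g` is bounded and continuous on the closed strip `S(z)` and holomorphic in its interior; for
`z.im = 0` the strip is the real line, and the last condition is void. -/
structure BddHolomorphicOnStrip {F : Type*} [NormedAddCommGroup F] [NormedSpace ℂ F]
    (z : ℂ) (g : ℂ → F) : Prop where
  bounded : ∃ M : ℝ, ∀ u ∈ hStrip z, ‖g u‖ ≤ M
  continuousOn : ContinuousOn g (hStrip z)
  differentiableOn : DifferentiableOn ℂ g (interior (hStrip z))

theorem norm_cexp_tilt (l : ℝ) (z u : ℂ) :
    ‖cexp (l * z.im * I * (u - z))‖ = Real.exp (l * (z.im * (z.im - u.im))) := by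
  rw [norm_exp]
  congr 1
  simp only [mul_re, ofReal_re, ofReal_im, mul_zero, sub_zero, I_re, mul_im, zero_mul, add_zero,
    I_im, mul_one, sub_self, sub_re, sub_im, zero_sub]
  ring

theorem bddHolomorphicOnStrip_cexp_tilt (l : ℝ) (z : ℂ) :
    BddHolomorphicOnStrip z fun u => cexp (l * z.im * I * (u - z)) := by
  refine ⟨?_, by fun_prop, by fun_prop⟩
  obtain ⟨M, hM⟩ := (isCompact_uIcc (a := (0 : ℝ)) (b := z.im)).exists_bound_of_continuousOn
    (f := fun y => Real.exp (l * (z.im * (z.im - y)))) (by fun_prop)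
  exact ⟨M, fun u hu => by simpa [norm_cexp_tilt] using hM u.im hu⟩

namespace BddHolomorphicOnStrip

variable {F : Type*} [NormedAddCommGroup F] [NormedSpace ℂ F] {z : ℂ} {f g : ℂ → F}

theorem sub (hf : BddHolomorphicOnStrip z f) (hg : BddHolomorphicOnStrip z g) :
    BddHolomorphicOnStrip z (f - g) := by
  obtain ⟨M, hM⟩ := hf.bounded
  obtain ⟨N, hN⟩ := hg.bounded
  exact ⟨⟨M + N, fun u hu => norm_sub_le_of_le (hM u hu) (hN u hu)⟩,
    hf.continuousOn.sub hg.continuousOn, hf.differentiableOn.sub hg.differentiableOn⟩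

theorem smul {φ : ℂ → ℂ} (hφ : BddHolomorphicOnStrip z φ) (hg : BddHolomorphicOnStrip z g) :
    BddHolomorphicOnStrip z (φ • g) := by
  obtain ⟨M, hM⟩ := hφ.bounded
  obtain ⟨N, hN⟩ := hg.bounded
  exact ⟨⟨M * N, fun u hu => (norm_smul_le _ _).trans
      (mul_le_mul (hM u hu) (hN u hu) (norm_nonneg _) ((norm_nonneg _).trans (hM u hu)))⟩,
    hφ.continuousOn.smul hg.continuousOn, hφ.differentiableOn.smul hg.differentiableOn⟩

theorem clm_comp {F' : Type*} [NormedAddCommGroup F'] [NormedSpace ℂ F']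
    (hg : BddHolomorphicOnStrip z g) (L : F →L[ℂ] F') :
    BddHolomorphicOnStrip z (L ∘ g) := by
  obtain ⟨M, hM⟩ := hg.bounded
  exact ⟨⟨‖L‖ * M, fun u hu => L.le_opNorm_of_le (hM u hu)⟩,
    L.continuous.comp_continuousOn hg.continuousOn,
    L.differentiable.comp_differentiableOn hg.differentiableOn⟩

theorem comp_add_ofReal (hg : BddHolomorphicOnStrip z g) (s : ℝ) :
    BddHolomorphicOnStrip z fun u => g (u + s) := by
  obtain ⟨M, hM⟩ := hg.bounded
  exact ⟨⟨M, fun u hu => hM _ (add_ofReal_mem_hStrip hu s)⟩,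
    hg.continuousOn.comp (by fun_prop) fun u hu => add_ofReal_mem_hStrip hu s,
    hg.differentiableOn.comp (by fun_prop) fun u hu => add_ofReal_mem_interior_hStrip hu s⟩

theorem diffContOnCl (hg : BddHolomorphicOnStrip z g) :
    DiffContOnCl ℂ g (interior (hStrip z)) :=
  ⟨hg.differentiableOn,
    hg.continuousOn.mono (closure_minimal interior_subset (isClosed_hStrip z))⟩

theorem norm_le_of_norm_le_boundary (hg : BddHolomorphicOnStrip z g) {C : ℝ}
    (hreal : ∀ t : ℝ, ‖g t‖ ≤ C) (hfar : ∀ t : ℝ, ‖g (z + t)‖ ≤ C) {u : ℂ} (hu : u ∈ hStrip z) :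
    ‖g u‖ ≤ C := by
  have hedge : ∀ v : ℂ, v.im = 0 ∨ v.im = z.im → ‖g v‖ ≤ C := by
    rintro v (hv | hv)
    · have : v = (v.re : ℝ) := Complex.ext (by simp) (by simpa using hv)
      exact this ▸ hreal v.re
    · have : v = z + (v.re - z.re : ℝ) := Complex.ext (by simp) (by simpa using hv)
      exact this ▸ hfar (v.re - z.re)
  obtain ⟨M, hM⟩ := hg.bounded
  refine PhragmenLindelof.horizontal_strip (interior_hStrip z ▸ hg.diffContOnCl)
    ⟨_, sub_one_lt _, 0, .of_bound M ?_⟩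
    (fun v hv => hedge v ?_) (fun v hv => hedge v ?_) hu.1 hu.2
  · filter_upwards [mem_inf_of_right (mem_principal_self _)] with v hv
    simpa using hM v (interior_subset (interior_hStrip z ▸ hv))
  · exact hv ▸ min_choice 0 z.im
  · exact hv ▸ max_choice 0 z.im

-- The exponential factor has modulus `1` on the far edge, and its size on the real line is
-- irrelevant because `g` vanishes there; `l` may then be sent to `∞`.
theorem exp_tilt_mul_norm_le (hg : BddHolomorphicOnStrip z g) (h0 : ∀ t : ℝ, g t = 0) {M : ℝ}
    (hM : ∀ t : ℝ, ‖g (z + t)‖ ≤ M) {u : ℂ} (hu : u ∈ hStrip z) (l : ℝ) :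
    Real.exp (l * (z.im * (z.im - u.im))) * ‖g u‖ ≤ M := by
  have hnorm (v : ℂ) : ‖((fun v => cexp (l * z.im * I * (v - z))) • g) v‖ =
      Real.exp (l * (z.im * (z.im - v.im))) * ‖g v‖ := by
    rw [Pi.smul_apply', norm_smul, norm_cexp_tilt]
  have hM0 : 0 ≤ M := (norm_nonneg _).trans (hM 0)
  rw [← hnorm]
  refine ((bddHolomorphicOnStrip_cexp_tilt l z).smul hg).norm_le_of_norm_le_boundary
    (fun t => ?_) (fun t => ?_) hu
  · simpa only [hnorm, h0, norm_zero, mul_zero] using hM0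
  · simpa only [hnorm, add_im, ofReal_im, add_zero, sub_self, mul_zero, Real.exp_zero,
      one_mul] using hM t

theorem eqOn_zero_of_forall_ofReal_eq_zero (hg : BddHolomorphicOnStrip z g)
    (h0 : ∀ t : ℝ, g t = 0) : EqOn g 0 (hStrip z) := by
  by_cases hz : z.im = 0
  · intro u hu
    have : u = (u.re : ℝ) := Complex.ext (by simp) (by simpa [hStrip, hz] using hu)
    exact this ▸ h0 u.re
  refine EqOn.of_subset_closure (fun u hu => ?_) hg.continuousOn continuousOn_const
    interior_subset (hStrip_subset_closure_interior hz)
  have hgap := im_mul_sub_im_pos_of_mem_interior_hStrip hz hu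
  obtain ⟨M, hM⟩ := hg.bounded
  by_contra hne
  have hunbdd : Tendsto (fun l : ℝ => Real.exp (l * (z.im * (z.im - u.im))) * ‖g u‖) atTop atTop :=
    (Real.tendsto_exp_atTop.comp (tendsto_id.atTop_mul_const hgap)).atTop_mul_const
      (norm_pos_iff.2 hne)
  obtain ⟨l, hl⟩ := (hunbdd.eventually_gt_atTop M).exists
  exact hl.not_ge (hg.exp_tilt_mul_norm_le h0
    (fun t => hM _ (add_ofReal_mem_hStrip (self_mem_hStrip z) t)) (interior_subset hu) l)

theorem eqOn_of_forall_ofReal_eq (hf : BddHolomorphicOnStrip z f)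
    (hg : BddHolomorphicOnStrip z g) (h : ∀ t : ℝ, f t = g t) : EqOn f g (hStrip z) := fun _ hu =>
  sub_eq_zero.1 <| (hf.sub hg).eqOn_zero_of_forall_ofReal_eq_zero (fun t => sub_eq_zero.2 (h t)) hu

theorem of_tendstoUniformlyOn [CompleteSpace F] {ι : Type*} {l : Filter ι} [l.NeBot] {G : ι → ℂ → F}
    (hG : ∀ i, BddHolomorphicOnStrip z (G i)) (hlim : TendstoUniformlyOn G g l (hStrip z)) :
    BddHolomorphicOnStrip z g := by
  refine ⟨?_, hlim.continuousOn (.of_forall fun i => (hG i).continuousOn),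
    (hlim.mono interior_subset).tendstoLocallyUniformlyOn.differentiableOn
      (.of_forall fun i => (hG i).differentiableOn) isOpen_interior⟩
  obtain ⟨i, hi⟩ := (Metric.tendstoUniformlyOn_iff.1 hlim 1 one_pos).exists
  obtain ⟨M, hM⟩ := (hG i).bounded
  refine ⟨M + 1, fun u hu => (norm_le_norm_add_norm_sub (G i u) (g u)).trans ?_⟩
  rw [← dist_eq_norm, dist_comm]
  exact add_le_add (hM u hu) (hi u hu).le

theorem integral_smul_comp_add_ofReal (hg : BddHolomorphicOnStrip z g) {k : ℝ → ℂ}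
    (hk : Integrable k) : BddHolomorphicOnStrip z fun u => ∫ t : ℝ, k t • g (u + t) := by
  obtain ⟨M, hM⟩ := hg.bounded
  have hmeas : ∀ u ∈ hStrip z, AEStronglyMeasurable fun t : ℝ => k t • g (u + t) := fun u hu =>
    hk.aestronglyMeasurable.smul (hg.continuousOn.comp_continuous (by fun_prop)
      (add_ofReal_mem_hStrip hu)).aestronglyMeasurable
  have hle (t : ℝ) : ∀ u ∈ hStrip z, ‖k t • g (u + t)‖ ≤ ‖k t‖ * M := fun u hu =>
    (norm_smul_le _ _).trans (by gcongr; exact hM _ (add_ofReal_mem_hStrip hu t))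
  have hbound : Integrable fun t => ‖k t‖ * M := hk.norm.mul_const M
  refine ⟨⟨∫ t, ‖k t‖ * M, fun u hu => norm_integral_le_of_norm_le hbound
      (ae_of_all _ fun t => hle t u hu)⟩,
    continuousOn_of_dominated hmeas (fun u hu => ae_of_all _ fun t => hle t u hu) hbound
      (ae_of_all _ fun t => (hg.comp_add_ofReal t).continuousOn.const_smul (k t)),
    differentiableOn_integral_of_dominated isOpen_interior
      (fun u hu => hmeas u (interior_subset hu))
      (ae_of_all _ fun t => (hg.comp_add_ofReal t).differentiableOn.const_smul (k t))
      fun u hu => ⟨_, mem_interior_iff_mem_nhds.1 hu, _, hbound, ae_of_all _ hle⟩⟩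

end BddHolomorphicOnStrip

theorem tendsto_integral_dilate_smul {F : Type*} [NormedAddCommGroup F] [NormedSpace ℂ F]
    [CompleteSpace F] {k : ℝ → ℂ} (hk : Integrable k) {p : ℝ → F} (hp : Continuous p) {C : ℝ}
    (hC : ∀ t, ‖p t‖ ≤ C) :
    Tendsto (fun r : ℝ => ∫ t, (r * k (r * t)) • p t) atTop (𝓝 ((∫ t, k t) • p 0)) := by
  rw [← integral_smul_const]
  have hdominated : Tendsto (fun r : ℝ => ∫ x, k x • p (x / r)) atTop (𝓝 (∫ x, k x • p 0)) := by
    refine tendsto_integral_filter_of_dominated_convergence (fun x => ‖k x‖ * C)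
      (.of_forall fun r => hk.aestronglyMeasurable.smul
        (hp.comp (continuous_id.div_const r)).aestronglyMeasurable)
      (.of_forall fun r => ae_of_all _ fun x => ?_) (hk.norm.mul_const C) (ae_of_all _ fun x => ?_)
    · rw [norm_smul]
      gcongr
      exact hC _
    · exact ((hp.tendsto 0).comp (tendsto_const_nhds.div_atTop tendsto_id)).const_smul _
  refine hdominated.congr' ?_
  filter_upwards [eventually_gt_atTop 0] with r hr
  have hscale := Measure.integral_comp_mul_left (fun x => k x • p (x / r)) r
  rw [abs_of_pos (inv_pos.2 hr), eq_inv_smul_iff₀ hr.ne', ← integral_smul] at hscale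
  rw [← hscale]
  refine integral_congr_ae (ae_of_all _ fun t => ?_)
  simp only [mul_div_cancel_left₀ t hr.ne', mul_smul, coe_smul]

/-- The entire extension of the Gaussian probability density `t ↦ r / √π * exp (-(r * t) ^ 2)`,
an approximate identity as `r → ∞`. -/
def gaussianKernel (r : ℝ) (u : ℂ) : ℂ := r * ((√Real.pi : ℂ)⁻¹ * cexp (-(r * u) ^ 2))

section GaussianKernel

variable {r : ℝ}

theorem differentiable_gaussianKernel (r : ℝ) : Differentiable ℂ (gaussianKernel r) := by
  unfold gaussianKernel
  fun_prop

theorem integral_gaussianKernel_one : ∫ t : ℝ, gaussianKernel 1 t = 1 := by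
  have hgauss : ∫ t : ℝ, cexp (-(t : ℂ) ^ 2) = √Real.pi := by
    simpa [← integral_complex_ofReal] using congrArg ((↑) : ℝ → ℂ) (integral_gaussian 1)
  simp [gaussianKernel, integral_const_mul, hgauss, Real.sqrt_ne_zero', Real.pi_pos]

theorem integrable_gaussianKernel_sub (hr : r ≠ 0) (u : ℂ) :
    Integrable fun t : ℝ => gaussianKernel r (t - u) := by
  have hquad := integrable_cexp_quadratic (b := (r : ℂ) ^ 2)
    (by simpa [← ofReal_pow] using sq_pos_of_ne_zero hr) (2 * r ^ 2 * u) (-(r * u) ^ 2)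
  refine ((hquad.const_mul (√Real.pi : ℂ)⁻¹).const_mul (r : ℂ)).congr (ae_of_all _ fun t => ?_)
  simp only [gaussianKernel]
  ring_nf

theorem integrable_gaussianKernel (hr : r ≠ 0) : Integrable fun t : ℝ => gaussianKernel r t := by
  simpa only [sub_zero] using integrable_gaussianKernel_sub hr 0

theorem norm_gaussianKernel (r : ℝ) (u : ℂ) :
    ‖gaussianKernel r u‖ = Real.exp ((r * u.im) ^ 2) * ‖gaussianKernel r u.re‖ := by
  have hexp : Real.exp (-(r * u) ^ 2 : ℂ).re =
      Real.exp ((r * u.im) ^ 2) * Real.exp (-(r * u.re : ℂ) ^ 2).re := by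
    rw [← Real.exp_add]
    congr 1
    simp only [pow_two, neg_re, mul_re, ofReal_re, ofReal_im, zero_mul, sub_zero, mul_im, add_zero,
      neg_sub, mul_zero]
    ring
  simp only [gaussianKernel, norm_mul, norm_exp, hexp]
  ring

theorem norm_gaussianKernel_sub_le (r R : ℝ) {u : ℂ} (hu : ‖u‖ ≤ R) (t : ℝ) :
    ‖gaussianKernel r (t - u)‖ ≤
      |r| * ((√Real.pi)⁻¹ * (Real.exp ((r * R) ^ 2) * Real.exp (-(r ^ 2 / 2) * t ^ 2))) := by
  have hsq : u.re ^ 2 + u.im ^ 2 ≤ R ^ 2 := by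
    calc u.re ^ 2 + u.im ^ 2 = ‖u‖ ^ 2 := by rw [Complex.sq_norm, normSq_apply]; ring
      _ ≤ R ^ 2 := by gcongr
  have hre : (-(r * (t - u)) ^ 2 : ℂ).re ≤ (r * R) ^ 2 + -(r ^ 2 / 2) * t ^ 2 := by
    have hgap : 0 ≤ r ^ 2 * ((t - 2 * u.re) ^ 2 / 2 + (R ^ 2 - (u.re ^ 2 + u.im ^ 2))) :=
      mul_nonneg (sq_nonneg r) (add_nonneg (by positivity) (sub_nonneg.2 hsq))
    have hre_eq : (-(r * (t - u)) ^ 2 : ℂ).re = r ^ 2 * (u.im ^ 2 - (t - u.re) ^ 2) := by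
      simp only [pow_two, neg_re, mul_re, ofReal_re, sub_re, ofReal_im, sub_im, zero_sub, mul_neg,
        zero_mul, neg_zero, sub_zero, mul_im, add_zero]
      ring
    linarith
  rw [gaussianKernel, norm_mul, norm_mul, norm_inv, norm_real, norm_real, norm_exp,
    Real.norm_of_nonneg (Real.sqrt_nonneg _), Real.norm_eq_abs, ← Real.exp_add]
  gcongr

end GaussianKernel

/-- The convolution of `p` with the Gaussian kernel, as a function of a complex variable; this
requires values of `p` on the real line only. -/
def gaussianSmoothing {F : Type*} [NormedAddCommGroup F] [NormedSpace ℂ F]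
    (r : ℝ) (p : ℝ → F) (u : ℂ) : F :=
  ∫ t : ℝ, gaussianKernel r (t - u) • p t

section GaussianSmoothing

variable {F : Type*} [NormedAddCommGroup F] [NormedSpace ℂ F] {r C : ℝ} {p : ℝ → F}

theorem gaussianSmoothing_add_ofReal (r : ℝ) (p : ℝ → F) (u : ℂ) (s : ℝ) :
    gaussianSmoothing r p (u + s) = gaussianSmoothing r (fun t => p (t + s)) u := by
  rw [gaussianSmoothing, gaussianSmoothing, ← integral_add_right_eq_self _ s]
  simp only [ofReal_add, add_sub_add_right_eq_sub]

theorem gaussianSmoothing_zero (r : ℝ) (p : ℝ → F) :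
    gaussianSmoothing r p 0 = ∫ t : ℝ, gaussianKernel r t • p t := by
  simp only [gaussianSmoothing, sub_zero]

theorem tendsto_gaussianSmoothing_zero [CompleteSpace F] (hp : Continuous p)
    (hC : ∀ t, ‖p t‖ ≤ C) :
    Tendsto (fun r => gaussianSmoothing r p 0) atTop (𝓝 (p 0)) := by
  have := tendsto_integral_dilate_smul (integrable_gaussianKernel one_ne_zero) hp hC
  rw [integral_gaussianKernel_one, one_smul] at this
  simpa [gaussianSmoothing_zero, gaussianKernel] using this

theorem integrable_gaussianKernel_smul (hr : r ≠ 0) (hp : Continuous p) (hC : ∀ t, ‖p t‖ ≤ C)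
    (u : ℂ) : Integrable fun t : ℝ => gaussianKernel r (t - u) • p t :=
  (integrable_gaussianKernel_sub hr u).smul_bdd C hp.aestronglyMeasurable (ae_of_all _ hC)

theorem clm_gaussianSmoothing [CompleteSpace F] {F' : Type*} [NormedAddCommGroup F']
    [NormedSpace ℂ F'] [CompleteSpace F'] (L : F →L[ℂ] F') (hr : r ≠ 0) (hp : Continuous p)
    (hC : ∀ t, ‖p t‖ ≤ C) (u : ℂ) :
    L (gaussianSmoothing r p u) = gaussianSmoothing r (fun t => L (p t)) u := by
  simp only [gaussianSmoothing, ← map_smul]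
  exact (L.integral_comp_comm (integrable_gaussianKernel_smul hr hp hC u)).symm

theorem differentiable_gaussianSmoothing (hr : r ≠ 0) (hp : Continuous p) (hC : ∀ t, ‖p t‖ ≤ C) :
    Differentiable ℂ (gaussianSmoothing r p) := by
  have hκ := differentiable_gaussianKernel r
  refine differentiableOn_univ.1 (differentiableOn_integral_of_dominated isOpen_univ
    (fun u _ => ((hκ.continuous.comp (by fun_prop)).smul hp).aestronglyMeasurable)
    (ae_of_all _ fun t => ((hκ.comp (by fun_prop)).smul_const _).differentiableOn)
    fun u _ => ⟨Metric.ball u 1, Metric.ball_mem_nhds u one_pos, fun t => |r| * ((√Real.pi)⁻¹ *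
      (Real.exp ((r * (‖u‖ + 1)) ^ 2) * Real.exp (-(r ^ 2 / 2) * t ^ 2))) * C, ?_,
      ae_of_all _ fun t y hy => ?_⟩)
  · exact ((((integrable_exp_neg_mul_sq (by positivity)).const_mul _).const_mul _).const_mul
      _).mul_const C
  · have hy' : ‖y‖ ≤ ‖u‖ + 1 := norm_le_norm_add_const_of_dist_le (Metric.mem_ball.1 hy).le
    exact (norm_smul_le _ _).trans
      (mul_le_mul (norm_gaussianKernel_sub_le r _ hy' t) (hC t) (norm_nonneg _) (by positivity))

theorem bddHolomorphicOnStrip_gaussianSmoothing (hr : r ≠ 0) (hp : Continuous p)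
    (hC : ∀ t, ‖p t‖ ≤ C) (z : ℂ) : BddHolomorphicOnStrip z (gaussianSmoothing r p) := by
  have hdiff := differentiable_gaussianSmoothing hr hp hC
  refine ⟨⟨∫ t : ℝ, Real.exp ((r * z.im) ^ 2) * ‖gaussianKernel r t‖ * C, fun u hu => ?_⟩,
    hdiff.continuous.continuousOn, hdiff.differentiableOn⟩
  have him : u.im ^ 2 ≤ z.im ^ 2 := sq_le_sq.2 (by simpa using abs_sub_left_of_mem_uIcc hu)
  rw [← integral_sub_right_eq_self _ u.re]
  refine norm_integral_le_of_norm_le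
    ((((integrable_gaussianKernel hr).norm.const_mul _).mul_const C).comp_sub_right u.re)
    (ae_of_all _ fun t => ?_)
  rw [norm_smul, norm_gaussianKernel]
  simp only [sub_im, ofReal_im, sub_re, ofReal_re, zero_sub, mul_neg, neg_sq, mul_pow]
  gcongr
  exact hC t

end GaussianSmoothing

theorem BddHolomorphicOnStrip.gaussianSmoothing_eq {F : Type*} [NormedAddCommGroup F]
    [NormedSpace ℂ F] {z : ℂ} {f : ℂ → F} (hf : BddHolomorphicOnStrip z f) {r : ℝ} (hr : r ≠ 0)
    {u : ℂ} (hu : u ∈ hStrip z) :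
    gaussianSmoothing r (fun t : ℝ => f t) u = gaussianSmoothing r (fun t : ℝ => f (u + t)) 0 := by
  obtain ⟨M, hM⟩ := hf.bounded
  have hsmooth : BddHolomorphicOnStrip z (gaussianSmoothing r fun t : ℝ => f t) :=
    bddHolomorphicOnStrip_gaussianSmoothing hr
      (hf.continuousOn.comp_continuous continuous_ofReal (ofReal_mem_hStrip z))
      (fun t => hM t (ofReal_mem_hStrip z t)) z
  have haverage := hf.integral_smul_comp_add_ofReal (integrable_gaussianKernel hr)
  rw [gaussianSmoothing_zero]
  refine hsmooth.eqOn_of_forall_ofReal_eq haverage (fun s => ?_) hu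
  have hshift := gaussianSmoothing_add_ofReal r (fun t : ℝ => f t) 0 s
  rw [zero_add, gaussianSmoothing_zero] at hshift
  simpa only [ofReal_add, add_comm] using hshift

/-- The function `p` on the real line extends to a bounded holomorphic function on the strip `S(z)`
whose value at `z` is `b`. -/
def HasBddStripExtension {F : Type*} [NormedAddCommGroup F] [NormedSpace ℂ F]
    (z : ℂ) (p : ℝ → F) (b : F) : Prop :=
  ∃ f : ℂ → F, BddHolomorphicOnStrip z f ∧ (∀ t : ℝ, f t = p t) ∧ f z = b

theorem HasBddStripExtension.hasContVal {E : Type*} [NormedAddCommGroup E] [NormedSpace ℂ E]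
    {α : ℝ → E →L[ℂ] E} {z : ℂ} {a b : E} (h : HasBddStripExtension z (fun t => α t a) b) :
    HasContVal α z a b :=
  let ⟨f, hf, hreal, hz⟩ := h
  ⟨f, hf.continuousOn, hf.differentiableOn, hreal, hz⟩

namespace IsOneParamRep

variable {E : Type*} [NormedAddCommGroup E] [NormedSpace ℂ E] {α : ℝ → E →L[ℂ] E}

theorem zero_apply (hα : IsOneParamRep α) (a : E) : α 0 a = a := by
  rw [hα.map_zero, ContinuousLinearMap.id_apply]

theorem add_apply (hα : IsOneParamRep α) (s t : ℝ) (a : E) : α (s + t) a = α s (α t a) := by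
  rw [hα.map_add, ContinuousLinearMap.comp_apply]

theorem norm_apply_le (hα : IsOneParamRep α) (t : ℝ) (a : E) : ‖α t a‖ ≤ ‖a‖ :=
  (α t).le_of_opNorm_le_of_le (hα.norm_le t) le_rfl |>.trans_eq (one_mul _)

theorem apply_gaussianSmoothing [CompleteSpace E] (hα : IsOneParamRep α) {r : ℝ} (hr : r ≠ 0)
    (a : E) (s : ℝ) (u : ℂ) :
    α s (gaussianSmoothing r (fun t => α t a) u) =
      gaussianSmoothing r (fun t => α t a) (u + s) := by
  rw [gaussianSmoothing_add_ofReal,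
    clm_gaussianSmoothing (α s) hr (hα.strong_cont a) (hα.norm_apply_le · a)]
  simp only [← hα.add_apply, add_comm]

theorem extension_add_ofReal (hα : IsOneParamRep α) {z : ℂ} {f : ℂ → E} {a : E}
    (hf : BddHolomorphicOnStrip z f) (hreal : ∀ t : ℝ, f t = α t a) {u : ℂ} (hu : u ∈ hStrip z)
    (s : ℝ) : f (u + s) = α s (f u) := by
  refine (hf.comp_add_ofReal s).eqOn_of_forall_ofReal_eq (hf.clm_comp (α s)) (fun t => ?_) hu
  rw [← ofReal_add, hreal, Function.comp_apply, hreal, ← hα.add_apply, add_comm]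

theorem norm_extension_le (hα : IsOneParamRep α) {z : ℂ} {f : ℂ → E} {a : E}
    (hf : BddHolomorphicOnStrip z f) (hreal : ∀ t : ℝ, f t = α t a) {u : ℂ} (hu : u ∈ hStrip z) :
    ‖f u‖ ≤ ‖(a, f z)‖ := by
  refine hf.norm_le_of_norm_le_boundary (fun t => ?_) (fun t => ?_) hu
  · exact hreal t ▸ (hα.norm_apply_le t a).trans (norm_fst_le (a, f z))
  · rw [hα.extension_add_ofReal hf hreal (self_mem_hStrip z)]
    exact (hα.norm_apply_le t _).trans (norm_snd_le (a, f z))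

theorem isClosed_setOf_hasBddStripExtension [CompleteSpace E] (hα : IsOneParamRep α) (z : ℂ) :
    IsClosed {x : E × E | HasBddStripExtension z (fun t => α t x.1) x.2} := by
  refine IsSeqClosed.isClosed fun x y hx hxy => ?_
  choose f hf hreal hz using hx
  have hdist (m n : ℕ) {u : ℂ} (hu : u ∈ hStrip z) : dist (f m u) (f n u) ≤ dist (x m) (x n) := by
    have := hα.norm_extension_le ((hf m).sub (hf n)) (a := (x m).1 - (x n).1)
      (fun t => by simp only [Pi.sub_apply, hreal, map_sub]) hu
    rwa [Pi.sub_apply, Pi.sub_apply, hz, hz, ← Prod.mk_sub_mk, ← dist_eq_norm, ← dist_eq_norm]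
      at this
  have hcauchy : UniformCauchySeqOn f atTop (hStrip z) := by
    refine Metric.uniformCauchySeqOn_iff.2 fun ε hε => ?_
    obtain ⟨N, hN⟩ := Metric.cauchySeq_iff.1 hxy.cauchySeq ε hε
    exact ⟨N, fun m hm n hn u hu => (hdist m n hu).trans_lt (hN m hm n hn)⟩
  have hlim : ∀ u ∈ hStrip z, ∃ b, Tendsto (f · u) atTop (𝓝 b) := fun u hu =>
    cauchySeq_tendsto_of_complete (hcauchy.cauchySeq hu)
  choose! g hg using hlim
  refine ⟨g, .of_tendstoUniformlyOn hf (hcauchy.tendstoUniformlyOn_of_tendsto hg), fun t => ?_, ?_⟩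
  · refine tendsto_nhds_unique (hg t (ofReal_mem_hStrip z t)) ?_
    simpa only [hreal, Function.comp_def] using ((α t).continuous.tendsto _).comp hxy.fst_nhds
  · refine tendsto_nhds_unique (hg z (self_mem_hStrip z)) ?_
    simpa only [hz] using hxy.snd_nhds

theorem weak_extension_add_ofReal (hα : IsOneParamRep α) {K : Set (E →L[ℂ] ℂ)}
    (hstab : ∀ θ ∈ K, ∀ t : ℝ, θ.comp (α t) ∈ K) {z : ℂ} {v w : E}
    (h : ∀ θ ∈ K, HasBddStripExtension z (fun t => θ (α t v)) (θ w)) {θ : E →L[ℂ] ℂ} (hθ : θ ∈ K)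
    {f : ℂ → ℂ} (hf : BddHolomorphicOnStrip z f) (hreal : ∀ t : ℝ, f t = θ (α t v)) (s : ℝ) :
    f (z + s) = θ (α s w) := by
  obtain ⟨g, hg, hg_real, hgz⟩ := h _ (hstab θ hθ s)
  have heq := (hf.comp_add_ofReal s).eqOn_of_forall_ofReal_eq hg
    (fun t => by simp only [← ofReal_add, hreal, hg_real, add_comm t s, hα.add_apply,
      ContinuousLinearMap.comp_apply]) (self_mem_hStrip z)
  exact heq.trans hgz

theorem gaussianSmoothing_eq_of_weak_extension [CompleteSpace E] (hα : IsOneParamRep α)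
    {K : Set (E →L[ℂ] ℂ)} (hsep : ∀ x : E, (∀ θ ∈ K, θ x = 0) → x = 0)
    (hstab : ∀ θ ∈ K, ∀ t : ℝ, θ.comp (α t) ∈ K) {z : ℂ} {v w : E}
    (h : ∀ θ ∈ K, HasBddStripExtension z (fun t => θ (α t v)) (θ w)) {r : ℝ} (hr : r ≠ 0) :
    gaussianSmoothing r (fun t => α t v) z = gaussianSmoothing r (fun t => α t w) 0 := by
  refine sub_eq_zero.1 (hsep _ fun θ hθ => ?_)
  obtain ⟨f, hf, hreal, -⟩ := h θ hθ
  have hclm (a : E) (u : ℂ) :=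
    clm_gaussianSmoothing θ hr (hα.strong_cont a) (hα.norm_apply_le · a) u
  rw [map_sub, sub_eq_zero]
  calc θ (gaussianSmoothing r (fun t => α t v) z)
      = gaussianSmoothing r (fun t : ℝ => f t) z := by simp only [hclm, hreal]
    _ = gaussianSmoothing r (fun t : ℝ => f (z + t)) 0 :=
      hf.gaussianSmoothing_eq hr (self_mem_hStrip z)
    _ = θ (gaussianSmoothing r (fun t => α t w) 0) := by
      simp only [hclm, hα.weak_extension_add_ofReal hstab h hθ hf hreal]

theorem hasBddStripExtension_gaussianSmoothing [CompleteSpace E] (hα : IsOneParamRep α) {r : ℝ}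
    (hr : r ≠ 0) (a : E) (z : ℂ) :
    HasBddStripExtension z (fun t => α t (gaussianSmoothing r (fun t => α t a) 0))
      (gaussianSmoothing r (fun t => α t a) z) :=
  ⟨_, bddHolomorphicOnStrip_gaussianSmoothing hr (hα.strong_cont a) (hα.norm_apply_le · a) z,
    fun t => by simp only [hα.apply_gaussianSmoothing hr, zero_add], rfl⟩

theorem tendsto_gaussianSmoothing [CompleteSpace E] (hα : IsOneParamRep α) (a : E) :
    Tendsto (fun r => gaussianSmoothing r (fun t => α t a) 0) atTop (𝓝 a) := by
  simpa only [hα.zero_apply] using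
    tendsto_gaussianSmoothing_zero (hα.strong_cont a) (hα.norm_apply_le · a)

end IsOneParamRep

/-- If `K ⊆ E*` is separating and stable under precomposition with every `α_t`, and if for
every `θ ∈ K` there is a bounded continuous function `f_θ` on `S(z)`, analytic in the
interior, with `f_θ t = θ (α_t v)` on `ℝ` and `f_θ z = θ w`, then `v ∈ D(α_z)` and
`α_z v = w`. -/
theorem weakly_analytic_implies_in_domain
    {E : Type*} [NormedAddCommGroup E] [NormedSpace ℂ E] [CompleteSpace E]
    {α : ℝ → E →L[ℂ] E} (hα : IsOneParamRep α)
    (K : Set (E →L[ℂ] ℂ))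
    (hsep : ∀ x : E, (∀ θ ∈ K, θ x = 0) → x = 0)
    (hstab : ∀ θ ∈ K, ∀ t : ℝ, θ.comp (α t) ∈ K)
    (z : ℂ) (v w : E)
    (h : ∀ θ ∈ K, ∃ f : ℂ → ℂ,
      (∃ M : ℝ, ∀ u ∈ hStrip z, ‖f u‖ ≤ M) ∧
      ContinuousOn f (hStrip z) ∧
      DifferentiableOn ℂ f (interior (hStrip z)) ∧
      (∀ t : ℝ, f t = θ (α t v)) ∧ f z = θ w) :
    HasContVal α z v w := by
  have hweak : ∀ θ ∈ K, HasBddStripExtension z (fun t => θ (α t v)) (θ w) := fun θ hθ =>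
    let ⟨f, hbdd, hcont, hdiff, hreal, hz⟩ := h θ hθ
    ⟨f, ⟨hbdd, hcont, hdiff⟩, hreal, hz⟩
  have hclosed := hα.isClosed_setOf_hasBddStripExtension z
  have hlim := (hα.tendsto_gaussianSmoothing v).prodMk_nhds (hα.tendsto_gaussianSmoothing w)
  refine HasBddStripExtension.hasContVal (hclosed.mem_of_tendsto hlim ?_)
  filter_upwards [eventually_ne_atTop 0] with r hr
  rw [← hα.gaussianSmoothing_eq_of_weak_extension hsep hstab hweak hr]
  exact hα.hasBddStripExtension_gaussianSmoothing hr v z
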